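/- arXiv:1711.04576 — 5 statements merged into one kernel-verified Lean document; each statement's English description precedes it below -/
import Mathlib

section
/- (Quantitative Poincaré recurrence.) For any measurable set A ⊆ X, one has limsup_{t→+∞} μ(A ∩ φ_t⁻¹ A) ≥ μ(A)². -/
open MeasureTheory Filter Topology

lemma qpr_aux {X : Type*} [MeasurableSpace X] (μ : Measure X) [IsProbabilityMeasure μ]
    (B : ℕ → Set X) (hB : ∀ i, MeasurableSet (B i)) (a c : ℝ) (hc : 0 ≤ c)
    (ha : ∀ i, μ.real (B i) = a)
    (hij : ∀ i j, i < j → μ.real (B i ∩ B j) ≤ c) : a ^ 2 ≤ c := by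
  by_contra! hlt
  let g : ℕ → X → ℝ := fun i x => (B i).indicator 1 x - a
  have hind : ∀ S : Set X, MeasurableSet S → Integrable (S.indicator (1 : X → ℝ)) μ :=
    fun S hS => (integrable_const (1 : ℝ)).indicator hS
  have hval : ∀ S : Set X, MeasurableSet S → ∫ x, S.indicator (1 : X → ℝ) x ∂μ = μ.real S :=
    fun S hS => integral_indicator_one hS
  have hprod : ∀ i j, (fun x => g i x * g j x) = fun x =>
      (B i ∩ B j).indicator (1 : X → ℝ) x - a * (B i).indicator (1 : X → ℝ) x
        - a * (B j).indicator (1 : X → ℝ) x + a ^ 2 := by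
    intro i j
    funext x
    simp only [g, Set.inter_indicator_one, Pi.mul_apply]
    ring
  have hI : ∀ i j, Integrable (fun x => g i x * g j x) μ := by
    intro i j
    rw [hprod]
    exact (((hind _ ((hB i).inter (hB j))).sub ((hind _ (hB i)).const_mul a)).sub
      ((hind _ (hB j)).const_mul a)).add (integrable_const _)
  have hint : ∀ i j, ∫ x, g i x * g j x ∂μ = μ.real (B i ∩ B j) - a ^ 2 := by
    intro i j
    rw [hprod]
    have h1 := hind _ ((hB i).inter (hB j))
    have h2 := (hind _ (hB i)).const_mul a
    have h3 := (hind _ (hB j)).const_mul a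
    rw [integral_add (by exact (h1.sub h2).sub h3) (integrable_const _),
      integral_sub (by exact h1.sub h2) h3,
      integral_sub h1 h2, integral_const_mul, integral_const_mul, hval _ (hB i), hval _ (hB j),
      hval _ ((hB i).inter (hB j)), ha, ha]
    simp
    ring
  have hne : ∀ i j, i ≠ j → μ.real (B i ∩ B j) ≤ c := by
    intro i j h
    rcases lt_or_gt_of_ne h with h | h
    · exact hij i j h
    · rw [Set.inter_comm]; exact hij j i h
  have key : ∀ n : ℕ, (n : ℝ) * n * (a ^ 2 - c) ≤ n := by
    intro n
    have h0 : 0 ≤ ∫ x, (∑ i ∈ Finset.range n, g i x) * (∑ j ∈ Finset.range n, g j x) ∂μ :=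
      integral_nonneg fun x => mul_self_nonneg _
    simp_rw [Finset.sum_mul_sum] at h0
    rw [integral_finsetSum _ (fun i _ => integrable_finsetSum _ (fun j _ => hI i j))] at h0
    simp_rw [integral_finsetSum (Finset.range n) (fun j _ => hI _ j), hint] at h0
    have h1 : ∑ i ∈ Finset.range n, ∑ j ∈ Finset.range n, (μ.real (B i ∩ B j) - a ^ 2)
        ≤ ∑ i ∈ Finset.range n, ∑ j ∈ Finset.range n,
          ((if i = j then (1 : ℝ) else 0) + (c - a ^ 2)) := by
      refine Finset.sum_le_sum fun i _ => Finset.sum_le_sum fun j _ => ?_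
      split_ifs with h
      · have : μ.real (B i ∩ B j) ≤ 1 := measureReal_le_one
        linarith
      · have := hne i j h
        linarith
    have h2 : ∑ i ∈ Finset.range n, ∑ j ∈ Finset.range n,
          ((if i = j then (1 : ℝ) else 0) + (c - a ^ 2)) ≤ n + n * n * (c - a ^ 2) := by
      simp only [Finset.sum_add_distrib, Finset.sum_ite_eq, Finset.sum_const, Finset.card_range,
        nsmul_eq_mul]
      rw [Finset.sum_congr rfl (fun i hi => if_pos hi)]
      simp
      linarith
    linarith
  obtain ⟨n, hn⟩ := exists_nat_gt (1 / (a ^ 2 - c))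
  have hd : 0 < a ^ 2 - c := by linarith
  have hn0 : (0 : ℝ) < n := lt_trans (by positivity) hn
  rw [div_lt_iff₀ hd] at hn
  have := key n
  nlinarith

/-- **Quantitative Poincaré recurrence.** For any measurable set `A ⊆ X`,
`limsup_{t→∞} μ(A ∩ φ_t⁻¹ A) ≥ μ(A)²`. -/
theorem quantitative_poincare_recurrence
    {X : Type*} [MeasurableSpace X] (μ : Measure X) [IsProbabilityMeasure μ]
    (φ : ℝ → X → X)
    (hmeas : Measurable fun p : ℝ × X => φ p.1 p.2)
    (h0 : φ 0 = id)
    (hgroup : ∀ t s : ℝ, φ (t + s) = φ t ∘ φ s)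
    (hpres : ∀ t : ℝ, MeasurePreserving (φ t) μ μ)
    (A : Set X) (hA : MeasurableSet A) :
    (μ A).toReal ^ 2 ≤
      Filter.limsup (fun t : ℝ => (μ (A ∩ φ t ⁻¹' A)).toReal) atTop := by
  refine le_of_forall_gt_imp_ge_of_dense fun c hc => ?_
  have hbdd : IsBoundedUnder (· ≤ ·) atTop (fun t : ℝ => (μ (A ∩ φ t ⁻¹' A)).toReal) :=
    isBoundedUnder_of ⟨1, fun t => measureReal_le_one (μ := μ)⟩
  obtain ⟨T, hT⟩ := eventually_atTop.1 (eventually_lt_of_limsup_lt hc hbdd)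
  set S := max T 1
  have hS : ∀ t, S ≤ t → μ.real (A ∩ φ t ⁻¹' A) ≤ c :=
    fun t ht => (hT t (le_trans (le_max_left _ _) ht)).le
  have hS1 : 1 ≤ S := le_max_right _ _
  refine qpr_aux μ (fun i => φ (i * S) ⁻¹' A) (fun i => (hpres _).measurable hA) _ c
    (le_trans measureReal_nonneg (hS S le_rfl)) (fun i => ?_) (fun i j hij => ?_)
  · exact (hpres _).measureReal_preimage hA.nullMeasurableSet
  · have e : φ (j * S) ⁻¹' A = φ (i * S) ⁻¹' (φ ((j - i : ℝ) * S) ⁻¹' A) := by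
      rw [← Set.preimage_comp, ← hgroup]
      congr 2
      ring
    simp only [e]
    rw [← Set.preimage_inter, (hpres _).measureReal_preimage
      (hA.inter ((hpres _).measurable hA)).nullMeasurableSet]
    apply hS
    have : (i : ℝ) + 1 ≤ j := by exact_mod_cast hij
    nlinarith
end

section
/- (Almost-sure recurrence for measure-preserving flows on metric spaces.) For μ-almost every y ∈ X there exists a sequence (t_k) of positive reals with t_k → ∞ as k → ∞ such that dist(φ_{t_k} y, y) → 0 as k → ∞. -/
open MeasureTheory Filter Topology

/-- **Almost-sure recurrence for measure-preserving flows on metric spaces.** For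
`μ`-almost every `y ∈ X` there is a sequence of positive times `t_k → ∞` such that
`dist(φ_{t_k} y, y) → 0`. -/
theorem almost_sure_recurrence
    {X : Type*} [MetricSpace X] [TopologicalSpace.SeparableSpace X]
    [MeasurableSpace X] [BorelSpace X]
    (μ : Measure X) [IsProbabilityMeasure μ]
    (φ : ℝ → X → X)
    (hmeas : Measurable fun p : ℝ × X => φ p.1 p.2)
    (h0 : φ 0 = id)
    (hgroup : ∀ t s : ℝ, φ (t + s) = φ t ∘ φ s)
    (hpres : ∀ t : ℝ, MeasurePreserving (φ t) μ μ) :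
    ∀ᵐ y ∂μ, ∃ tk : ℕ → ℝ, (∀ k, 0 < tk k) ∧ Tendsto tk atTop atTop ∧
      Tendsto (fun k => dist (φ (tk k) y) y) atTop (𝓝 0) := by
  have : SecondCountableTopology X := UniformSpace.secondCountable_of_separable X
  have hit : ∀ n : ℕ, (φ 1)^[n] = φ (n : ℝ) := by
    intro n
    induction n with
    | zero => simp [h0]
    | succ k ih =>
      rw [Function.iterate_succ', ih, ← hgroup]
      congr 1
      push_cast
      ring
  filter_upwards [(hpres 1).conservative.ae_frequently_mem_of_mem_nhds] with y hy
  have key : ∀ k : ℕ, ∃ n : ℕ, k + 1 ≤ n ∧ dist (φ (n : ℝ) y) y < 1 / ((k : ℝ) + 1) := by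
    intro k
    have hb := hy (Metric.ball y (1 / ((k : ℝ) + 1)))
      (Metric.ball_mem_nhds y Nat.one_div_pos_of_nat)
    obtain ⟨n, hn, hmem⟩ := (frequently_atTop.1 hb) (k + 1)
    refine ⟨n, hn, ?_⟩
    rw [hit n] at hmem
    exact hmem
  choose n hn hd using key
  refine ⟨fun k => (n k : ℝ), fun k => ?_, ?_, ?_⟩
  · have := hn k
    exact Nat.cast_pos.2 (by omega)
  · refine tendsto_natCast_atTop_atTop.comp ?_
    exact tendsto_atTop_mono (fun k => (Nat.le_succ k).trans (hn k)) tendsto_id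
  · exact squeeze_zero (fun k => dist_nonneg) (fun k => (hd k).le)
      tendsto_one_div_add_atTop_nhds_zero_nat
end

section
/- (Coercivity of the second almost conservation law.) For every α ∈ (0,1) and all real sequences u, v with ‖u‖₂ < ∞ and ‖v‖ < ∞, and every real Q ≥ 0, the quantity G₂ := E + (α/2) Σ_{j≥0} (m₀² + λ_j) u_j v_j + (α²/4) ‖u‖₂², where E := (1/2)(‖u‖₁² + ‖v‖²) + Q, satisfies G₂ ≥ (1/4) E; in particular G₂ ≥ 0. -/
open scoped BigOperators

/-- **Coercivity of the second almost conservation law.** For `α ∈ (0,1)`, sequences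
`u, v` with `‖u‖₂ < ∞`, `‖v‖ < ∞` and `Q ≥ 0`, the quantity
`G₂ = E + (α/2) Σ_j (m₀² + λ_j) u_j v_j + (α²/4)‖u‖₂²`, with
`E = (1/2)(‖u‖₁² + ‖v‖²) + Q`, satisfies `G₂ ≥ (1/4) E`; in particular `G₂ ≥ 0`. -/
theorem G2_coercive
    (lam : ℕ → ℝ) (hmono : Monotone lam) (hlam : ∀ j, 0 ≤ lam j)
    (m0sq : ℝ) (hc : 0 < m0sq + lam 0)
    (α : ℝ) (hα : 0 < α ∧ α < 1)
    (u v : ℕ → ℝ)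
    (hu : Summable fun j => (m0sq + lam j) ^ 2 * u j ^ 2)
    (hv : Summable fun j => v j ^ 2)
    (Q : ℝ) (hQ : 0 ≤ Q) :
    ∀ E G₂ : ℝ,
      E = (1 / 2) * ((∑' j, (m0sq + lam j) * u j ^ 2) + ∑' j, v j ^ 2) + Q →
      G₂ = E + (α / 2) * (∑' j, (m0sq + lam j) * u j * v j) +
        (α ^ 2 / 4) * ∑' j, (m0sq + lam j) ^ 2 * u j ^ 2 →
      (1 / 4) * E ≤ G₂ ∧ 0 ≤ G₂ := by
  intro E G₂ hE hG
  have hpos : ∀ j, 0 < m0sq + lam j := fun j => by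
    have := hmono (Nat.zero_le j)
    linarith
  have hS : Summable fun j => (m0sq + lam j) * u j * v j := by
    refine Summable.of_norm_bounded (hu.add hv) (fun j => ?_)
    rw [Real.norm_eq_abs, abs_le]
    constructor
    · nlinarith [sq_nonneg ((m0sq + lam j) * u j + v j), sq_nonneg ((m0sq + lam j) * u j),
        sq_nonneg (v j)]
    · nlinarith [sq_nonneg ((m0sq + lam j) * u j - v j), sq_nonneg ((m0sq + lam j) * u j),
        sq_nonneg (v j)]
  have hA : 0 ≤ ∑' j, (m0sq + lam j) * u j ^ 2 :=
    tsum_nonneg fun j => mul_nonneg (hpos j).le (sq_nonneg _)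
  have hV : 0 ≤ ∑' j, v j ^ 2 := tsum_nonneg fun j => sq_nonneg _
  have hsum := ((hS.hasSum.mul_left (α / 2)).add (hu.hasSum.mul_left (α ^ 2 / 4))).add
    (hv.hasSum.mul_left (1 / 4))
  have key := hsum.nonneg (fun j => by
    nlinarith [sq_nonneg (α / 2 * ((m0sq + lam j) * u j) + v j / 2)])
  constructor
  · linarith
  · linarith
end

section
/- (Domination of G₁ by its dissipation rate.) There exists α₀ ∈ (0,1] such that for every α ∈ (0,α₀), all real sequences u, v with ‖u‖₁ < ∞ and ‖v‖₁ < ∞, and every real Q ≥ 0, one has G₁ ≤ ((2+c)/(2κ²)) · L₁, where G₁ := E + (αc/2)(u,v) + (α²c/4)‖u‖₁², L₁ := (1/2)( c‖u‖₁² + 2‖v‖₁² − c‖v‖² + 4cQ ), E := (1/2)(‖u‖₁² + ‖v‖²) + Q, and κ := min(c,1). -/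
open scoped BigOperators

/-- **Domination of `G₁` by its dissipation rate.** There is `α₀ ∈ (0,1]` such that
for all `α ∈ (0,α₀)`, sequences `u, v` with `‖u‖₁ < ∞`, `‖v‖₁ < ∞` and `Q ≥ 0`,
one has `G₁ ≤ ((2+c)/(2κ²)) L₁`, where
`G₁ = E + (αc/2)(u,v) + (α²c/4)‖u‖₁²`,
`L₁ = (1/2)(c‖u‖₁² + 2‖v‖₁² − c‖v‖² + 4cQ)`,
`E = (1/2)(‖u‖₁² + ‖v‖²) + Q`, `c = m₀² + λ₀` and `κ = min(c,1)`. -/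
theorem G1_dominated_by_L1
    (lam : ℕ → ℝ) (hmono : Monotone lam) (hlam : ∀ j, 0 ≤ lam j)
    (m0sq : ℝ) (hc : 0 < m0sq + lam 0) :
    ∃ α₀ : ℝ, 0 < α₀ ∧ α₀ ≤ 1 ∧
      ∀ α : ℝ, 0 < α → α < α₀ →
      ∀ u v : ℕ → ℝ,
        (Summable fun j => (m0sq + lam j) * u j ^ 2) →
        (Summable fun j => (m0sq + lam j) * v j ^ 2) →
      ∀ Q : ℝ, 0 ≤ Q →
      ∀ E G₁ L₁ : ℝ,
        E = (1 / 2) * ((∑' j, (m0sq + lam j) * u j ^ 2) + ∑' j, v j ^ 2) + Q →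
        G₁ = E + (α * (m0sq + lam 0) / 2) * (∑' j, u j * v j) +
          (α ^ 2 * (m0sq + lam 0) / 4) * ∑' j, (m0sq + lam j) * u j ^ 2 →
        L₁ = (1 / 2) * ((m0sq + lam 0) * (∑' j, (m0sq + lam j) * u j ^ 2) +
          2 * (∑' j, (m0sq + lam j) * v j ^ 2) -
          (m0sq + lam 0) * (∑' j, v j ^ 2) + 4 * (m0sq + lam 0) * Q) →
        G₁ ≤ ((2 + (m0sq + lam 0)) / (2 * min (m0sq + lam 0) 1 ^ 2)) * L₁ := by
  have hcj : ∀ j, m0sq + lam 0 ≤ m0sq + lam j := fun j => by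
    have := hmono (Nat.zero_le j)
    linarith
  generalize hcdef : m0sq + lam 0 = c at *
  refine ⟨1 / (1 + c), by positivity, by rw [div_le_one (by positivity)]; linarith, ?_⟩
  intro α hα hα1 u v hu hv Q hQ E G₁ L₁ hE hG hL
  have key : ∀ w : ℕ → ℝ, (Summable fun j => (m0sq + lam j) * w j ^ 2) →
      (Summable fun j => w j ^ 2) ∧
      c * (∑' j, w j ^ 2) ≤ ∑' j, (m0sq + lam j) * w j ^ 2 := by
    intro w hw
    have hle : ∀ j, c * w j ^ 2 ≤ (m0sq + lam j) * w j ^ 2 := fun j =>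
      mul_le_mul_of_nonneg_right (hcj j) (sq_nonneg _)
    have h1 : Summable fun j => c * w j ^ 2 :=
      Summable.of_nonneg_of_le (fun j => by positivity) hle hw
    refine ⟨(summable_mul_left_iff hc.ne').1 h1, ?_⟩
    rw [← tsum_mul_left]
    exact h1.tsum_le_tsum hle hw
  obtain ⟨hu2, hU⟩ := key u hu
  obtain ⟨hv2, hV⟩ := key v hv
  have hsum : Summable fun j => (1 / 2) * (u j ^ 2 + v j ^ 2) := (hu2.add hv2).mul_left _
  have hprod : Summable fun j => u j * v j := by
    refine Summable.of_norm_bounded hsum (fun j => ?_)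
    rw [Real.norm_eq_abs, abs_le]
    constructor <;> nlinarith [sq_nonneg (u j + v j), sq_nonneg (u j - v j)]
  have hP : (∑' j, u j * v j) ≤ (1 / 2) * ((∑' j, u j ^ 2) + ∑' j, v j ^ 2) := by
    rw [← hu2.tsum_add hv2, ← tsum_mul_left]
    exact hprod.tsum_le_tsum (fun j => by nlinarith [sq_nonneg (u j - v j)]) hsum
  have hU0 : 0 ≤ ∑' j, u j ^ 2 := tsum_nonneg fun j => sq_nonneg _
  have hV0 : 0 ≤ ∑' j, v j ^ 2 := tsum_nonneg fun j => sq_nonneg _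
  generalize (∑' j, u j * v j) = P at *
  generalize (∑' j, u j ^ 2) = A at *
  generalize (∑' j, v j ^ 2) = V at *
  generalize (∑' j, (m0sq + lam j) * u j ^ 2) = U at *
  generalize (∑' j, (m0sq + lam j) * v j ^ 2) = W at *
  have hUnn : 0 ≤ U := le_trans (by positivity) hU
  have hα2 : α * (1 + c) < 1 := by rwa [lt_div_iff₀ (by positivity)] at hα1
  have hαle : α ≤ 1 := by nlinarith [mul_pos hα hc]
  have hκ : 0 < min c 1 := lt_min hc one_pos
  have hκc : min c 1 ≤ c := min_le_left _ _
  have hκ1 : min c 1 ≤ 1 := min_le_right _ _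
  generalize min c 1 = k at *
  have hK : 3 / 2 ≤ (2 + c) / (2 * k ^ 2) * c := by
    rw [div_mul_eq_mul_div, le_div_iff₀ (by positivity)]
    nlinarith [mul_self_le_mul_self hκ.le hκc]
  have hKpos : 0 ≤ (2 + c) / (2 * k ^ 2) := by positivity
  generalize (2 + c) / (2 * k ^ 2) = K at *
  have hL' : c * ((1 / 2) * (U + V) + 2 * Q) ≤ L₁ := by rw [hL]; nlinarith
  have h1 : 3 / 2 * ((1 / 2) * (U + V) + 2 * Q) ≤ K * L₁ := by
    calc _ ≤ (K * c) * ((1 / 2) * (U + V) + 2 * Q) :=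
          mul_le_mul_of_nonneg_right hK (by positivity)
      _ = K * (c * ((1 / 2) * (U + V) + 2 * Q)) := by ring
      _ ≤ _ := mul_le_mul_of_nonneg_left hL' hKpos
  refine le_trans ?_ h1
  have h2 : α * c / 2 * P ≤ α * c / 2 * ((1 / 2) * (A + V)) :=
    mul_le_mul_of_nonneg_left hP (by positivity)
  have h3 : α * (c * A) ≤ α * U := mul_le_mul_of_nonneg_left hU hα.le
  have h4 : α ^ 2 * c * U ≤ α * c * U := by
    have : α ^ 2 ≤ α := by nlinarith
    gcongr
  have h5 : α * (1 + c) * U ≤ 1 * U := mul_le_mul_of_nonneg_right hα2.le hUnn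
  have h6 : α * c * V ≤ 1 * V := mul_le_mul_of_nonneg_right (by nlinarith) hV0
  rw [hG, hE]
  linarith
end

section
/- (Domination of G₂ by the energy and its dissipation rate.) Fix ε ∈ (0,1). There exists α₀ ∈ (0,1] such that for every α ∈ (0,α₀), all real sequences u, v with ‖u‖₂ < ∞ and ‖v‖₁ < ∞, and every real Q ≥ 0, one has G₂ ≤ (5E + L₂)/4, where G₂ := E + (α/2) Σ_{j≥0} (m₀² + λ_j) u_j v_j + (α²/4) ‖u‖₂², L₂ := (1/2)((1−ε)‖u‖₂² + ‖v‖₁²), and E := (1/2)(‖u‖₁² + ‖v‖²) + Q. -/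
open scoped BigOperators

/-- **Domination of `G₂` by the energy and its dissipation rate.** Fix `ε ∈ (0,1)`.
There is `α₀ ∈ (0,1]` such that for all `α ∈ (0,α₀)`, sequences `u, v` with
`‖u‖₂ < ∞`, `‖v‖₁ < ∞` and `Q ≥ 0`, one has `G₂ ≤ (5E + L₂)/4`, where
`G₂ = E + (α/2) Σ_j (m₀²+λ_j) u_j v_j + (α²/4)‖u‖₂²`,
`L₂ = (1/2)((1−ε)‖u‖₂² + ‖v‖₁²)` and `E = (1/2)(‖u‖₁² + ‖v‖²) + Q`. -/
theorem G2_dominated_by_E_and_L2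
    (lam : ℕ → ℝ) (hmono : Monotone lam) (hlam : ∀ j, 0 ≤ lam j)
    (m0sq : ℝ) (hc : 0 < m0sq + lam 0)
    (ε : ℝ) (hε : 0 < ε ∧ ε < 1) :
    ∃ α₀ : ℝ, 0 < α₀ ∧ α₀ ≤ 1 ∧
      ∀ α : ℝ, 0 < α → α < α₀ →
      ∀ u v : ℕ → ℝ,
        (Summable fun j => (m0sq + lam j) ^ 2 * u j ^ 2) →
        (Summable fun j => (m0sq + lam j) * v j ^ 2) →
      ∀ Q : ℝ, 0 ≤ Q →
      ∀ E G₂ L₂ : ℝ,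
        E = (1 / 2) * ((∑' j, (m0sq + lam j) * u j ^ 2) + ∑' j, v j ^ 2) + Q →
        G₂ = E + (α / 2) * (∑' j, (m0sq + lam j) * u j * v j) +
          (α ^ 2 / 4) * ∑' j, (m0sq + lam j) ^ 2 * u j ^ 2 →
        L₂ = (1 / 2) * ((1 - ε) * (∑' j, (m0sq + lam j) ^ 2 * u j ^ 2) +
          ∑' j, (m0sq + lam j) * v j ^ 2) →
        G₂ ≤ (5 * E + L₂) / 4 := by
  obtain ⟨hε0, hε1⟩ := hε
  refine ⟨(1 - ε) / 6, by linarith, by linarith, ?_⟩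
  intro α hα hαlt u v hA hV Q hQ E G₂ L₂ hE hG hL
  have ha : ∀ j, m0sq + lam 0 ≤ m0sq + lam j := fun j => by
    have := hmono (Nat.zero_le j)
    linarith
  have hapos : ∀ j, 0 < m0sq + lam j := fun j => lt_of_lt_of_le hc (ha j)
  have hv : Summable fun j => v j ^ 2 := by
    refine Summable.of_nonneg_of_le (fun j => sq_nonneg _) (fun j => ?_)
      (hV.mul_left (m0sq + lam 0)⁻¹)
    rw [inv_mul_eq_div, le_div_iff₀ hc]
    nlinarith [mul_le_mul_of_nonneg_right (ha j) (sq_nonneg (v j))]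
  have hS : Summable fun j => (m0sq + lam j) * u j * v j := by
    refine Summable.of_norm_bounded (hA.add hv) (fun j => ?_)
    rw [Real.norm_eq_abs, abs_le]
    constructor <;>
    nlinarith [sq_nonneg ((m0sq + lam j) * u j + v j), sq_nonneg ((m0sq + lam j) * u j - v j),
      sq_nonneg ((m0sq + lam j) * u j), sq_nonneg (v j)]
  have key : (α / 2) * (∑' j, (m0sq + lam j) * u j * v j) ≤
      (α ^ 2 / 2) * (∑' j, (m0sq + lam j) ^ 2 * u j ^ 2) + (1 / 8) * ∑' j, v j ^ 2 := by
    rw [← tsum_mul_left, ← tsum_mul_left, ← tsum_mul_left,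
      ← (hA.mul_left (α ^ 2 / 2)).tsum_add (hv.mul_left (1 / 8))]
    refine (hS.mul_left _).tsum_le_tsum (fun j => ?_)
      ((hA.mul_left (α ^ 2 / 2)).add (hv.mul_left (1 / 8)))
    nlinarith [sq_nonneg (2 * (α * ((m0sq + lam j) * u j)) - v j)]
  have hA0 : 0 ≤ ∑' j, (m0sq + lam j) ^ 2 * u j ^ 2 := tsum_nonneg fun j => by positivity
  have hU0 : 0 ≤ ∑' j, (m0sq + lam j) * u j ^ 2 :=
    tsum_nonneg fun j => mul_nonneg (hapos j).le (sq_nonneg _)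
  have hV0 : 0 ≤ ∑' j, (m0sq + lam j) * v j ^ 2 :=
    tsum_nonneg fun j => mul_nonneg (hapos j).le (sq_nonneg _)
  have hα2 : α ^ 2 ≤ (1 - ε) / 6 := by nlinarith
  have h2 := mul_le_mul_of_nonneg_right hα2 hA0
  rw [hG, hL]
  linarith
end
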